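/- In Ω¹(A_θ), the left A_θ-submodule generated by {d_θ b : b ∈ B}, the right A_θ-submodule generated by the same set, and the A_θ-sub-bimodule generated by it all coincide (this is the module Ω¹_hor(A_θ) of horizontal 1-forms of the deformed Hopf fibration). Moreover the B-submodule B d_θ B := span{b d_θ b' : b, b' ∈ B} ⊆ Ω¹(A_θ), with the differential b ↦ d_θ b, is isomorphic as a B-module with derivation to the module of Kähler differentials Ω¹_{B/ℂ} of B ≅ O(S²). -/

import Mathlib

/-!
Let `c` be the bicharacter defining the star product. The linear automorphism
`a ⊗ b ↦ c (deg a) (deg b) • (a ⊗ b)` of `A ⊗ A` carries the kernel `Γ¹(A_θ)` of the star product to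
the kernel `I` of the commutative product. It multiplies the braided product of two tensors by a
scalar depending only on their total degrees, so it carries `Γ¹(A_θ)²` to `I²`. Modulo `I²`, the
elements `a ⋆ d b ⋆ a'` become unit multiples of `a a' d b`, hence the left module, the right module
and the bimodule generated by `d B` are all the image of `A • d B`. On `B ⊗ B` nothing is twisted,
so it remains to see that `Ω[B⁄ℂ] → Ω[A⁄ℂ]` is injective. Where a product `f = y * x` of elements of
degree `-1` and `1` is invertible, `A` retracts onto `B` by dividing an element of degree `n` by
`xⁿ`; since `z₁* z₁ + z₂* z₂ = 1`, these loci cover the base.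
-/

set_option synthInstance.maxHeartbeats 1000000
set_option maxHeartbeats 1000000

open scoped TensorProduct
noncomputable section

/-- The total-degree-`n` component of a `ℤ²`-graded module. -/
def totalDeg {A : Type} [AddCommMonoid A] [Module ℂ A]
    (𝒜 : ℤ × ℤ → Submodule ℂ A) (n : ℤ) : Submodule ℂ A :=
  ⨆ (p : ℤ × ℤ) (_ : p.1 + p.2 = n), 𝒜 p

/-- The phase factor `e^{πiθ(m₁m₂' − m₂m₁')}`. -/
def phase (θ : ℝ) (p q : ℤ × ℤ) : ℂ :=
  Complex.exp (Complex.I * ((Real.pi * θ : ℝ) : ℂ) * ((p.1 * q.2 - p.2 * q.1 : ℤ) : ℂ))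

/-- The cotriangular structure phase `R_θ(t_u ⊗ t_w) = e^{−2πiθ(u₁w₂ − u₂w₁)}`. -/
def rphase (θ : ℝ) (u w : ℤ × ℤ) : ℂ :=
  Complex.exp (-(Complex.I * ((2 * Real.pi * θ : ℝ) : ℂ) * ((u.1 * w.2 - u.2 * w.1 : ℤ) : ℂ)))

section LocalSections

variable {R A B : Type*} [CommRing R] [CommRing A] [CommRing B] [Algebra R A] [Algebra R B]
  [Algebra B A] [IsScalarTower R B A]

lemma exists_pow_smul_eq_zero_of_section {f : B} (r : A →ₐ[B] Localization.Away f) {ω : Ω[B⁄R]}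
    (hω : KaehlerDifferential.map R R B A ω = 0) : ∃ n : ℕ, f ^ n • ω = 0 := by
  let L := Localization.Away f
  let : Algebra A L := r.toRingHom.toAlgebra
  have : IsScalarTower B A L := .of_algebraMap_eq fun b => (r.commutes b).symm
  have : IsScalarTower R A L := .of_algebraMap_eq fun a => by
    rw [IsScalarTower.algebraMap_apply R B L, IsScalarTower.algebraMap_apply R B A,
      ← IsScalarTower.algebraMap_apply B A L]
  have hcomp : (KaehlerDifferential.map R R A L).restrictScalars B ∘ₗ
      KaehlerDifferential.map R R B A = KaehlerDifferential.map R R B L := by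
    apply Derivation.liftKaehlerDifferential_unique
    ext b
    simp [← IsScalarTower.algebraMap_apply B A L]
  have hL : KaehlerDifferential.map R R B L ω = 0 := by simp [← hcomp, hω]
  obtain ⟨⟨_, n, rfl⟩, hn⟩ := (IsLocalizedModule.eq_zero_iff (Submonoid.powers f) _).mp hL
  exact ⟨n, hn⟩

theorem kaehlerDifferential_map_injective_of_local_sections {s : Set B} (hs : Ideal.span s = ⊤)
    (r : ∀ f ∈ s, Nonempty (A →ₐ[B] Localization.Away f)) :
    Function.Injective (KaehlerDifferential.map R R B A) := by
  refine (injective_iff_map_eq_zero _).mpr fun ω hω => ?_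
  refine (Submodule.mem_bot B).mp
    (Submodule.mem_of_span_eq_top_of_smul_pow_mem ⊥ s hs ω fun f => ?_)
  obtain ⟨r⟩ := r f f.2
  exact exists_pow_smul_eq_zero_of_section r hω

end LocalSections

section Graded

variable {ι R A : Type*} [AddCommMonoid ι] [CommRing R] [CommRing A] [Algebra R A]

/-- The part of degree `n` of an `ι`-graded module for the coarser grading by `deg : ι → ℤ`. -/
def degreePart (𝒜 : ι → Submodule R A) (deg : ι →+ ℤ) (n : ℤ) : Submodule R A :=
  ⨆ (p : ι) (_ : deg p = n), 𝒜 p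

variable {𝒜 : ι → Submodule R A} {deg : ι →+ ℤ}

lemma mem_degreePart {p : ι} {n : ℤ} (hp : deg p = n) {a : A} (ha : a ∈ 𝒜 p) :
    a ∈ degreePart 𝒜 deg n :=
  Submodule.mem_iSup_of_mem p (Submodule.mem_iSup_of_mem hp ha)

lemma degreePart_eq_span (n : ℤ) :
    degreePart 𝒜 deg n = Submodule.span R {a | ∃ p, deg p = n ∧ a ∈ 𝒜 p} := by
  refine le_antisymm (iSup₂_le fun p hp a ha => Submodule.subset_span ⟨p, hp, ha⟩) ?_
  rw [Submodule.span_le]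
  rintro a ⟨p, hp, ha⟩
  exact mem_degreePart hp ha

instance degreePart.gradedMonoid [SetLike.GradedMonoid 𝒜] :
    SetLike.GradedMonoid (degreePart 𝒜 deg) where
  one_mem := mem_degreePart (map_zero deg) SetLike.GradedOne.one_mem
  mul_mem m n _ _ hx hy := by
    suffices degreePart 𝒜 deg m * degreePart 𝒜 deg n ≤ degreePart 𝒜 deg (m + n) from
      this (Submodule.mul_mem_mul hx hy)
    rw [degreePart_eq_span m, degreePart_eq_span n, Submodule.span_mul_span, Submodule.span_le]
    rintro _ ⟨a, ⟨p, rfl, ha⟩, b, ⟨q, rfl, hb⟩, rfl⟩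
    exact mem_degreePart (map_add deg p q) (SetLike.mul_mem_graded ha hb)

variable [DecidableEq ι] [GradedAlgebra 𝒜] {C : Type*} [CommRing C] [Algebra R C]

variable (𝒜 deg) in
/-- The algebra map sending `a` of degree `n` to `uⁿ * φ a`. -/
def unitTwist (φ : A →ₐ[R] C) (u : Cˣ) : A →ₐ[R] C :=
  (DirectSum.toAlgebra R (fun p => 𝒜 p)
    (fun p => (↑(u ^ deg p) : C) • φ.toLinearMap ∘ₗ (𝒜 p).subtype)
    (by simp)
    (fun a b => by simp [zpow_add, mul_mul_mul_comm])).comp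
      (DirectSum.decomposeAlgEquiv 𝒜).toAlgHom

lemma unitTwist_of_mem (φ : A →ₐ[R] C) (u : Cˣ) {n : ℤ} {a : A} (ha : a ∈ degreePart 𝒜 deg n) :
    unitTwist 𝒜 deg φ u a = ↑(u ^ n) * φ a := by
  suffices degreePart 𝒜 deg n ≤ LinearMap.eqLocus (unitTwist 𝒜 deg φ u).toLinearMap
      ((↑(u ^ n) : C) • φ.toLinearMap) from this ha
  rw [degreePart, iSup₂_le_iff]
  rintro p rfl a ha
  have htoModule := DirectSum.toModule_lof R
    (φ := fun p => (↑(u ^ deg p) : C) • φ.toLinearMap ∘ₗ (𝒜 p).subtype) p ⟨a, ha⟩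
  rw [LinearMap.mem_eqLocus, AlgHom.toLinearMap_apply, unitTwist, AlgHom.comp_apply,
    AlgEquiv.toAlgHom_apply, DirectSum.decomposeAlgEquiv_apply, DirectSum.decompose_of_mem 𝒜 ha]
  exact htoModule

end Graded

section Base

variable {ι R A B : Type*} [DecidableEq ι] [AddCommMonoid ι] [CommRing R] [CommRing A] [Algebra R A]
  {𝒜 : ι → Submodule R A} [GradedAlgebra 𝒜] {deg : ι →+ ℤ} [CommRing B] [Algebra B A]
  (hB : Set.range (algebraMap B A) = degreePart 𝒜 deg 0)

include hB

lemma inv_zpow_mul_mem_range {L L' : Type*} [CommRing L] [CommRing L'] [Algebra B L]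
    [Algebra A L'] [Algebra B L'] [IsScalarTower B A L'] {x y : A}
    (hx : x ∈ degreePart 𝒜 deg 1) (hy : y ∈ degreePart 𝒜 deg (-1)) {f : B}
    (hf : algebraMap B A f = y * x) [IsLocalization.Away f L] (j : L →ₐ[B] L') {u : L'ˣ}
    (hu : (u : L') = algebraMap A L' x) {n : ℤ} {a : A} (ha : a ∈ degreePart 𝒜 deg n) :
    ↑(u⁻¹ ^ n) * algebraMap A L' a ∈ j.range := by
  have hzero {b : A} (hb : b ∈ degreePart 𝒜 deg 0) : algebraMap A L' b ∈ j.range := by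
    rw [← SetLike.mem_coe, ← hB] at hb
    obtain ⟨b, rfl⟩ := hb
    rw [← IsScalarTower.algebraMap_apply]
    exact j.range.algebraMap_mem b
  obtain ⟨k, rfl | rfl⟩ := n.eq_nat_or_neg
  · have hinv : (↑u⁻¹ : L') = j (IsLocalization.Away.invSelf f) * algebraMap A L' y := by
      refine Units.inv_eq_of_mul_eq_one_right ?_
      rw [mul_left_comm, hu, ← map_mul, mul_comm x, ← hf, ← IsScalarTower.algebraMap_apply,
        ← j.commutes, ← map_mul, mul_comm, IsLocalization.Away.mul_invSelf, map_one]
    rw [zpow_natCast, Units.val_pow_eq_pow_val, hinv, mul_pow, mul_assoc,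
      ← map_pow, ← map_pow, ← map_mul]
    refine mul_mem ⟨_, rfl⟩ (hzero ?_)
    simpa using SetLike.mul_mem_graded (SetLike.pow_mem_graded k hy) ha
  · rw [inv_zpow', neg_neg, zpow_natCast, Units.val_pow_eq_pow_val, hu, ← map_pow, ← map_mul]
    refine hzero ?_
    simpa using SetLike.mul_mem_graded (SetLike.pow_mem_graded k hx) ha

variable [FaithfulSMul B A]

-- Where `f = y * x` is invertible, so is `x`, and `a ↦ a / xⁿ`, `a` of degree `n`, is a section.
lemma exists_local_section {x y : A} (hx : x ∈ degreePart 𝒜 deg 1)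
    (hy : y ∈ degreePart 𝒜 deg (-1)) {f : B} (hf : algebraMap B A f = y * x) :
    Nonempty (A →ₐ[B] Localization.Away f) := by
  let L := Localization.Away (Algebra.ofId B A f)
  obtain ⟨u, hu⟩ : IsUnit (algebraMap A L x) := by
    refine isUnit_of_mul_isUnit_right (x := algebraMap A L y) ?_
    rw [← map_mul, ← hf]
    exact IsLocalization.Away.algebraMap_isUnit (Algebra.ofId B A f)
  let σ : A →ₐ[B] L :=
    { unitTwist 𝒜 deg (IsScalarTower.toAlgHom R A L) u⁻¹ with
      commutes' b := by
        have hb : algebraMap B A b ∈ degreePart 𝒜 deg 0 := hB.subset ⟨b, rfl⟩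
        refine (unitTwist_of_mem (IsScalarTower.toAlgHom R A L) u⁻¹ hb).trans ?_
        rw [zpow_zero, Units.val_one, one_mul]
        exact (IsScalarTower.algebraMap_apply B A L b).symm }
  let j := Localization.awayMapₐ (Algebra.ofId B A) f
  have hj : Function.Injective j :=
    IsLocalization.Away.mapₐ_injective_of_injective _ (FaithfulSMul.algebraMap_injective B A)
  have hσ (a : A) : σ a ∈ j.range := by
    induction a using DirectSum.Decomposition.inductionOn 𝒜 with
    | zero => exact map_zero σ ▸ zero_mem _
    | homogeneous a =>
      have ha := mem_degreePart (deg := deg) rfl a.2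
      exact (unitTwist_of_mem (IsScalarTower.toAlgHom R A L) u⁻¹ ha).symm ▸
        inv_zpow_mul_mem_range hB hx hy hf j hu ha
    | add a b ha hb => rw [map_add]; exact add_mem ha hb
  exact ⟨(AlgEquiv.ofInjective j hj).symm.toAlgHom.comp (σ.codRestrict j.range hσ)⟩

theorem kaehlerDifferential_map_injective_of_one_mem_mul [Algebra R B] [IsScalarTower R B A]
    (hone : (1 : A) ∈ degreePart 𝒜 deg (-1) * degreePart 𝒜 deg 1) :
    Function.Injective (KaehlerDifferential.map R R B A) := by
  let s : Set B :=
    {f | ∃ y ∈ degreePart 𝒜 deg (-1), ∃ x ∈ degreePart 𝒜 deg 1, algebraMap B A f = y * x}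
  refine kaehlerDifferential_map_injective_of_local_sections (s := s) ?_ ?_
  · have hle : degreePart 𝒜 deg (-1) * degreePart 𝒜 deg 1 ≤
        ((Ideal.span s).restrictScalars R).map (IsScalarTower.toAlgHom R B A).toLinearMap := by
      refine Submodule.mul_le.mpr fun y hy x hx => ?_
      have hyx : y * x ∈ degreePart 𝒜 deg 0 := by simpa using SetLike.mul_mem_graded hy hx
      obtain ⟨f, hf⟩ := hB.superset hyx
      exact ⟨f, Ideal.subset_span ⟨y, hy, x, hx, hf⟩, hf⟩
    obtain ⟨b, hb, hb1⟩ := hle hone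
    have : b = 1 := FaithfulSMul.algebraMap_injective B A (hb1.trans (map_one _).symm)
    exact (Ideal.eq_top_iff_one _).mpr (this ▸ hb)
  · rintro f ⟨y, hy, x, hx, hf⟩
    exact exists_local_section hB hx hy hf

end Base

section Bilinear

variable {R M N P : Type*} [CommRing R] [AddCommGroup M] [AddCommGroup N] [AddCommGroup P]
  [Module R M] [Module R N] [Module R P] {f g : M →ₗ[R] N →ₗ[R] P} {s : Set M} {t : Set N}

lemma map₂_span_le_of_forall_smul (h : ∀ m ∈ s, ∀ n ∈ t, ∃ r : R, f m n = r • g m n) :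
    Submodule.map₂ f (.span R s) (.span R t) ≤ Submodule.map₂ g (.span R s) (.span R t) := by
  rw [Submodule.map₂_span_span, Submodule.span_le]
  rintro _ ⟨m, hm, n, hn, rfl⟩
  obtain ⟨r, hr⟩ := h m hm n hn
  exact Set.mem_of_eq_of_mem hr (Submodule.smul_mem _ r
    (Submodule.apply_mem_map₂ g (Submodule.subset_span hm) (Submodule.subset_span hn)))

lemma map₂_span_eq_of_forall_unit_smul (h : ∀ m ∈ s, ∀ n ∈ t, ∃ u : Rˣ, f m n = u • g m n) :
    Submodule.map₂ f (.span R s) (.span R t) = Submodule.map₂ g (.span R s) (.span R t) := by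
  refine le_antisymm (map₂_span_le_of_forall_smul fun m hm n hn => ?_)
    (map₂_span_le_of_forall_smul fun m hm n hn => ?_) <;> obtain ⟨u, hu⟩ := h m hm n hn
  · exact ⟨u, hu⟩
  · exact ⟨↑u⁻¹, (inv_smul_eq_iff.mpr hu).symm⟩

lemma bilin_eq_of_mem_span (h : ∀ m ∈ s, ∀ n ∈ t, f m n = g m n) {m : M} {n : N}
    (hm : m ∈ Submodule.span R s) (hn : n ∈ Submodule.span R t) : f m n = g m n := by
  have hmt (m : M) (hm : m ∈ s) : f m n = g m n := LinearMap.eqOn_span (h m hm) hn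
  exact LinearMap.eqOn_span (f := f.flip n) (g := g.flip n) hmt hm

lemma map₂_map₂_span_span {L Q : Type*} [AddCommGroup L] [Module R L] [AddCommGroup Q] [Module R Q]
    (f : P →ₗ[R] L →ₗ[R] Q) (g : M →ₗ[R] N →ₗ[R] P) (s : Set M) (t : Set N) (W : Submodule R L) :
    Submodule.map₂ f (Submodule.map₂ g (.span R s) (.span R t)) W =
      Submodule.span R {y | ∃ m ∈ s, ∃ n ∈ t, ∃ l ∈ W, y = f (g m n) l} := by
  rw [Submodule.map₂_span_span, ← Submodule.span_eq W, Submodule.map₂_span_span]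
  congr 1
  ext
  simp [Set.mem_image2, and_assoc, eq_comm]

end Bilinear

section Twist

variable {ι R A : Type*} [DecidableEq ι] [AddCommMonoid ι] [CommRing R] [CommRing A] [Algebra R A]
  (𝒜 : ι → Submodule R A) [GradedAlgebra 𝒜] (c : ι → ι → Rˣ)

/-- `S` is spanned by homogeneous elements. -/
def IsSpannedByHomogeneous (S : Submodule R A) : Prop :=
  ∃ s : Set A, (∀ a ∈ s, SetLike.IsHomogeneousElem 𝒜 a) ∧ Submodule.span R s = S

lemma span_isHomogeneousElem_eq_top :
    Submodule.span R {a | SetLike.IsHomogeneousElem 𝒜 a} = ⊤ := by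
  rw [eq_top_iff, ← (DirectSum.Decomposition.isInternal 𝒜).submodule_iSup_eq_top, iSup_le_iff]
  exact fun p a ha => Submodule.subset_span ⟨p, ha⟩

variable {𝒜} in
lemma isSpannedByHomogeneous_span_univ : IsSpannedByHomogeneous 𝒜 (.span R Set.univ) :=
  ⟨_, fun _ => id, (span_isHomogeneousElem_eq_top 𝒜).trans Submodule.span_univ.symm⟩

variable {𝒜} in
lemma isSpannedByHomogeneous_span_one : IsSpannedByHomogeneous 𝒜 (.span R {1}) :=
  ⟨{1}, fun _ ha => ⟨0, ha ▸ SetLike.GradedOne.one_mem⟩, rfl⟩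

omit [DecidableEq ι] [GradedAlgebra 𝒜] in
variable {𝒜} in
lemma isSpannedByHomogeneous_degreePart (deg : ι →+ ℤ) (n : ℤ) :
    IsSpannedByHomogeneous 𝒜 (degreePart 𝒜 deg n) :=
  ⟨{a | ∃ p, deg p = n ∧ a ∈ 𝒜 p}, fun _ ⟨p, _, ha⟩ => ⟨p, ha⟩, (degreePart_eq_span n).symm⟩

/-- The decomposition of `A ⊗ A` into the tensor products of the components of `A`. -/
def decomposeTensor : A ⊗[R] A ≃ₗ[R] DirectSum (ι × ι) fun pq => 𝒜 pq.1 ⊗[R] 𝒜 pq.2 :=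
  TensorProduct.congr (DirectSum.decomposeLinearEquiv 𝒜) (DirectSum.decomposeLinearEquiv 𝒜) ≪≫ₗ
    TensorProduct.directSum R R (𝒜 ·) (𝒜 ·)

/-- The linear automorphism `a ⊗ b ↦ c p q • (a ⊗ b)`, `a` of degree `p` and `b` of degree `q`,
which untwists the star product. -/
def twist : A ⊗[R] A ≃ₗ[R] A ⊗[R] A :=
  decomposeTensor 𝒜 ≪≫ₗ DFinsupp.mapRange.linearEquiv (fun pq => .smulOfUnit (c pq.1 pq.2)) ≪≫ₗ
    (decomposeTensor 𝒜).symm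

variable {𝒜} {p q : ι} {a b : A}

lemma decomposeTensor_tmul (ha : a ∈ 𝒜 p) (hb : b ∈ 𝒜 q) : decomposeTensor 𝒜 (a ⊗ₜ b) =
    DirectSum.lof R _ (fun pq : ι × ι => 𝒜 pq.1 ⊗[R] 𝒜 pq.2) (p, q) (⟨a, ha⟩ ⊗ₜ ⟨b, hb⟩) := by
  simp only [decomposeTensor, LinearEquiv.trans_apply, TensorProduct.congr_tmul,
    DirectSum.decomposeLinearEquiv_apply, DirectSum.decompose_of_mem 𝒜 ha,
    DirectSum.decompose_of_mem 𝒜 hb]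
  exact TensorProduct.directSum_lof_tmul_lof ..

lemma twist_tmul (ha : a ∈ 𝒜 p) (hb : b ∈ 𝒜 q) :
    twist 𝒜 c (a ⊗ₜ b) = c p q • (a ⊗ₜ[R] b) := by
  rw [twist, LinearEquiv.trans_apply, LinearEquiv.trans_apply, LinearEquiv.symm_apply_eq,
    Units.smul_def, map_smul, decomposeTensor_tmul ha hb, ← map_smul]
  exact DFinsupp.mapRange_single (hf := fun _ => map_zero _)

lemma twist_symm_tmul (ha : a ∈ 𝒜 p) (hb : b ∈ 𝒜 q) :
    (twist 𝒜 c).symm (a ⊗ₜ b) = (c p q)⁻¹ • (a ⊗ₜ[R] b) := by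
  rw [LinearEquiv.symm_apply_eq, Units.smul_def, map_smul, twist_tmul c ha hb, ← Units.smul_def,
    inv_smul_smul]

end Twist

section SmulDiff

variable {R A M : Type*} [CommRing R] [CommRing A] [Algebra R A] [AddCommGroup M] [Module R M]
  [Module A M] [IsScalarTower R A M]

/-- The bilinear map `(a, b) ↦ a • d b`. -/
def smulDiff (d : A →ₗ[R] M) : A →ₗ[R] A →ₗ[R] M :=
  (Algebra.lsmul R R M).toLinearMap.compl₂ d

@[simp] lemma smulDiff_apply (d : A →ₗ[R] M) (a b : A) : smulDiff d a b = a • d b := rfl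

lemma map₂_smulDiff_top (d : A →ₗ[R] M) : Submodule.map₂ (smulDiff d) ⊤ ⊤ =
    (Submodule.span A (Set.range d)).restrictScalars R := by
  rw [← Submodule.span_smul_of_span_eq_top (R := R) (s := Set.univ) Submodule.span_univ,
    Submodule.map₂_eq_span_image2]
  congr 1
  ext; simp [Set.mem_smul]

variable (R A) in
lemma map₂_smulDiff_D_eq_top :
    Submodule.map₂ (smulDiff (KaehlerDifferential.D R A).toLinearMap) ⊤ ⊤ = ⊤ := by
  rw [map₂_smulDiff_top]
  exact congrArg (Submodule.restrictScalars R) (KaehlerDifferential.span_range_derivation R A)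

variable (R A) in
/-- The universal differential `b ↦ 1 ⊗ b - b ⊗ 1`. -/
def tensorDiff : A →ₗ[R] A ⊗[R] A := TensorProduct.mk R A A 1 - (TensorProduct.mk R A A).flip 1

@[simp] lemma tensorDiff_apply (b : A) : tensorDiff R A b = 1 ⊗ₜ b - b ⊗ₜ 1 := rfl

lemma ideal_restrictScalars_eq_map₂ : (KaehlerDifferential.ideal R A).restrictScalars R =
    Submodule.map₂ (smulDiff (tensorDiff R A)) ⊤ ⊤ := by
  rw [map₂_smulDiff_top]
  exact congr_arg (Submodule.restrictScalars R)
    (KaehlerDifferential.submodule_span_range_eq_ideal R A).symm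

end SmulDiff

section StarProduct

variable {ι G : Type*} [AddCommMonoid ι] [CommGroup G]

/-- A bicharacter on the monoid of degrees, with values in a commutative group. -/
structure IsBicharacter (c : ι → ι → G) : Prop where
  map_add_left (p q r : ι) : c (p + q) r = c p r * c q r
  map_add_right (p q r : ι) : c p (q + r) = c p q * c p r

lemma IsBicharacter.zero_left {c : ι → ι → G} (hc : IsBicharacter c) (p : ι) : c 0 p = 1 := by
  simpa using hc.map_add_left 0 0 p

lemma IsBicharacter.zero_right {c : ι → ι → G} (hc : IsBicharacter c) (p : ι) : c p 0 = 1 := by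
  simpa using hc.map_add_right p 0 0

lemma IsBicharacter.cocycle {c : ι → ι → G} (hc : IsBicharacter c) (p q r : ι) :
    c p q * c (p + q) r = c q r * c p (q + r) := by
  rw [hc.map_add_left, hc.map_add_right]
  ac_rfl

variable {R A : Type*} [CommRing R] [CommRing A] [Algebra R A]

/-- `stp` is the deformation of the product of `A` by `c`. -/
def IsStarProduct (𝒜 : ι → Submodule R A) (c : ι → ι → Rˣ) (stp : A →ₗ[R] A →ₗ[R] A) : Prop :=
  ∀ p q, ∀ a ∈ 𝒜 p, ∀ b ∈ 𝒜 q, stp a b = c p q • (a * b)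

/-- `bmul` is the product of `A ⊗ A` obtained from the star product of both factors and the
braiding `b ⊗ a' ↦ (c q p' / c p' q) • (a' ⊗ b)`, `b` of degree `q` and `a'` of degree `p'`. -/
def IsBraidedProduct (𝒜 : ι → Submodule R A) (c : ι → ι → Rˣ) (stp : A →ₗ[R] A →ₗ[R] A)
    (bmul : A ⊗[R] A →ₗ[R] A ⊗[R] A →ₗ[R] A ⊗[R] A) : Prop :=
  ∀ p q p' q', ∀ a ∈ 𝒜 p, ∀ b ∈ 𝒜 q, ∀ a' ∈ 𝒜 p', ∀ b' ∈ 𝒜 q',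
    bmul (a ⊗ₜ b) (a' ⊗ₜ b') = (c q p' / c p' q) • (stp a a' ⊗ₜ[R] stp b b')

variable [DecidableEq ι] {𝒜 : ι → Submodule R A} [GradedAlgebra 𝒜] {c : ι → ι → Rˣ}
  {stp : A →ₗ[R] A →ₗ[R] A} {bmul : A ⊗[R] A →ₗ[R] A ⊗[R] A →ₗ[R] A ⊗[R] A}

lemma IsStarProduct.lift_eq (hstp : IsStarProduct 𝒜 c stp) :
    TensorProduct.lift stp = LinearMap.mul' R A ∘ₗ (twist 𝒜 c).toLinearMap := by
  ext a b
  refine bilin_eq_of_mem_span (f := stp) (g := (TensorProduct.mk R A A).compr₂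
    (LinearMap.mul' R A ∘ₗ (twist 𝒜 c).toLinearMap)) (s := {a | SetLike.IsHomogeneousElem 𝒜 a})
    (t := {a | SetLike.IsHomogeneousElem 𝒜 a}) ?_ ?_ ?_
  · rintro a ⟨p, ha⟩ b ⟨q, hb⟩
    simp [hstp p q a ha b hb, twist_tmul c ha hb, Units.smul_def]
  all_goals rw [span_isHomogeneousElem_eq_top]; trivial

lemma map_twist_ker_lift (hstp : IsStarProduct 𝒜 c stp) :
    (LinearMap.ker (TensorProduct.lift stp)).map (twist 𝒜 c).toLinearMap =
      (KaehlerDifferential.ideal R A).restrictScalars R := by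
  ext x
  rw [Submodule.mem_map_equiv, LinearMap.mem_ker, hstp.lift_eq]
  exact Iff.of_eq (congrArg (LinearMap.mul' R A · = 0) ((twist 𝒜 c).apply_symm_apply x))

lemma twist_bmul_tmul (hc : IsBicharacter c) (hstp : IsStarProduct 𝒜 c stp)
    (hbmul : IsBraidedProduct 𝒜 c stp bmul) {p q p' q' : ι} {a b a' b' : A} (ha : a ∈ 𝒜 p)
    (hb : b ∈ 𝒜 q) (ha' : a' ∈ 𝒜 p') (hb' : b' ∈ 𝒜 q') :
    twist 𝒜 c (bmul ((twist 𝒜 c).symm (a ⊗ₜ b)) ((twist 𝒜 c).symm (a' ⊗ₜ b'))) =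
      c (p + q) (p' + q') • (a ⊗ₜ[R] b * a' ⊗ₜ[R] b') := by
  rw [twist_symm_tmul c ha hb, twist_symm_tmul c ha' hb']
  simp only [Units.smul_def, map_smul, LinearMap.smul_apply]
  rw [hbmul p q p' q' a ha b hb a' ha' b' hb', hstp p p' a ha a' ha', hstp q q' b hb b' hb']
  simp only [Units.smul_def, TensorProduct.smul_tmul_smul, map_smul]
  rw [twist_tmul c (SetLike.mul_mem_graded ha ha') (SetLike.mul_mem_graded hb hb'),
    Algebra.TensorProduct.tmul_mul_tmul]
  simp only [← Units.smul_def, smul_smul, ← Units.val_mul]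
  congr 1
  simp only [hc.map_add_left, hc.map_add_right]
  refine Additive.ofMul.injective ?_
  simp only [ofMul_mul, ofMul_inv, ofMul_div]
  abel

-- The scalar in `twist_bmul_tmul` depends only on total degrees, so both terms of
-- `a • (1 ⊗ b - b ⊗ 1)` are rescaled alike.
lemma twist_bmul_smulDiff (hc : IsBicharacter c) (hstp : IsStarProduct 𝒜 c stp)
    (hbmul : IsBraidedProduct 𝒜 c stp bmul) {p q p' q' : ι} {a b a' b' : A} (ha : a ∈ 𝒜 p)
    (hb : b ∈ 𝒜 q) (ha' : a' ∈ 𝒜 p') (hb' : b' ∈ 𝒜 q') :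
    twist 𝒜 c (bmul ((twist 𝒜 c).symm (a • tensorDiff R A b))
        ((twist 𝒜 c).symm (a' • tensorDiff R A b'))) =
      c (p + q) (p' + q') • (a • tensorDiff R A b * a' • tensorDiff R A b') := by
  have hone : (1 : A) ∈ 𝒜 0 := SetLike.GradedOne.one_mem
  have hab := SetLike.mul_mem_graded ha hb
  have hab' := SetLike.mul_mem_graded ha' hb'
  have hdiff (a b : A) : a • tensorDiff R A b = a ⊗ₜ b - (a * b) ⊗ₜ 1 := by
    simp [smul_sub, TensorProduct.smul_tmul']
  simp only [hdiff, map_sub, LinearMap.sub_apply]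
  rw [twist_bmul_tmul hc hstp hbmul ha hb ha' hb', twist_bmul_tmul hc hstp hbmul hab hone ha' hb',
    twist_bmul_tmul hc hstp hbmul ha hb hab' hone, twist_bmul_tmul hc hstp hbmul hab hone hab' hone]
  simp only [add_zero, sub_mul, mul_sub, smul_sub]

variable (R 𝒜) in
lemma ideal_restrictScalars_eq_span :
    (KaehlerDifferential.ideal R A).restrictScalars R = Submodule.span R
      (Set.image2 (fun a b => smulDiff (tensorDiff R A) a b)
        {a | SetLike.IsHomogeneousElem 𝒜 a} {b | SetLike.IsHomogeneousElem 𝒜 b}) := by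
  rw [ideal_restrictScalars_eq_map₂, ← span_isHomogeneousElem_eq_top 𝒜,
    Submodule.map₂_span_span]

theorem map_twist_map₂_ker (hc : IsBicharacter c) (hstp : IsStarProduct 𝒜 c stp)
    (hbmul : IsBraidedProduct 𝒜 c stp bmul) :
    (Submodule.map₂ bmul (LinearMap.ker (TensorProduct.lift stp))
        (LinearMap.ker (TensorProduct.lift stp))).map (twist 𝒜 c).toLinearMap =
      (KaehlerDifferential.ideal R A ^ 2).restrictScalars R := by
  let τ := twist 𝒜 c
  let β := (bmul.compl₁₂ τ.symm.toLinearMap τ.symm.toLinearMap).compr₂ τ.toLinearMap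
  have hβ : bmul.compr₂ τ.toLinearMap = β.compl₁₂ τ.toLinearMap τ.toLinearMap := by
    ext; simp [β]
  rw [Submodule.map_map₂, hβ, ← Submodule.map₂_map_map, map_twist_ker_lift hstp,
    Submodule.restrictScalars_pow two_ne_zero, pow_two, Submodule.mul_eq_map₂,
    ideal_restrictScalars_eq_span R 𝒜]
  refine map₂_span_eq_of_forall_unit_smul ?_
  rintro _ ⟨a, ⟨p, ha⟩, b, ⟨q, hb⟩, rfl⟩ _ ⟨a', ⟨p', ha'⟩, b', ⟨q', hb'⟩, rfl⟩
  exact ⟨_, twist_bmul_smulDiff hc hstp hbmul ha hb ha' hb'⟩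

end StarProduct

section Cotangent

variable {R A : Type*} [CommRing R] [CommRing A] [Algebra R A]

lemma mul'_smul_kaehler (t : A ⊗[R] A) (ω : Ω[A⁄R]) : LinearMap.mul' R A t • ω = t • ω := by
  have hmem : algebraMap A (A ⊗[R] A) (LinearMap.mul' R A t) - t ∈
      KaehlerDifferential.ideal R A := by
    rw [KaehlerDifferential.ideal, RingHom.mem_ker, map_sub, sub_eq_zero]
    exact mul_one _
  rw [← algebraMap_smul (A ⊗[R] A), ← sub_eq_zero, ← sub_smul]
  exact Ideal.Cotangent.smul_eq_zero_of_mem hmem ω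

variable (τ : A ⊗[R] A ≃ₗ[R] A ⊗[R] A) {K : Submodule R (A ⊗[R] A)}
  (hK : K.map τ.toLinearMap = (KaehlerDifferential.ideal R A ^ 2).restrictScalars R)

/-- The embedding of `Ω[A⁄R] = I / I²` into `(A ⊗ A) / K` obtained from a linear automorphism
of `A ⊗ A` carrying `K` to `I²`. -/
def kaehlerEmbedding : Ω[A⁄R] →ₗ[R] (A ⊗[R] A) ⧸ K :=
  (Submodule.Quotient.equiv K _ τ hK).symm.toLinearMap ∘ₗ
    (Submodule.Quotient.restrictScalarsEquiv R
      (KaehlerDifferential.ideal R A ^ 2)).symm.toLinearMap ∘ₗ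
    (KaehlerDifferential.ideal R A).cotangentToQuotientSquare.restrictScalars R

lemma kaehlerEmbedding_injective : Function.Injective (kaehlerEmbedding τ hK) :=
  (Submodule.Quotient.equiv K _ τ hK).symm.injective.comp <|
    (Submodule.Quotient.restrictScalarsEquiv R _).symm.injective.comp
      (KaehlerDifferential.ideal R A).cotangentToQuotientSquare_injective

lemma kaehlerEmbedding_mul'_smul_D (t : A ⊗[R] A) (b : A) :
    kaehlerEmbedding τ hK (LinearMap.mul' R A t • KaehlerDifferential.D R A b) =
      K.mkQ (τ.symm (t * tensorDiff R A b)) := by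
  rw [mul'_smul_kaehler]
  rfl

end Cotangent

section Horizontal

variable {ι R A : Type*} [DecidableEq ι] [AddCommMonoid ι] [CommRing R] [CommRing A] [Algebra R A]
  {𝒜 : ι → Submodule R A} [GradedAlgebra 𝒜] {c : ι → ι → Rˣ} {stp : A →ₗ[R] A →ₗ[R] A}
  {K : Submodule R (A ⊗[R] A)} {U : Submodule R A}

/-- The trilinear map `(a ⊗ a', b) ↦ a ⋆ d b ⋆ a'`, before passing to `Ω¹(A_θ)`. -/
def bimoduleDiff (stp : A →ₗ[R] A →ₗ[R] A) : A ⊗[R] A →ₗ[R] A →ₗ[R] A ⊗[R] A :=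
  (TensorProduct.lift
    ((TensorProduct.mapBilinear (.id R) A A A A).compl₁₂ stp stp.flip)).compl₂ (tensorDiff R A)

@[simp] lemma bimoduleDiff_tmul (stp : A →ₗ[R] A →ₗ[R] A) (a a' b : A) :
    bimoduleDiff stp (a ⊗ₜ a') b =
      TensorProduct.map (stp a) (stp.flip a') (1 ⊗ₜ b - b ⊗ₜ 1) := rfl

/-- The module of horizontal forms relative to `U`: the image of `A • dU ⊆ Ω[A⁄R]` in the
deformed differentials of `A`. -/
def horizontalForms (hK : K.map (twist 𝒜 c).toLinearMap =
    (KaehlerDifferential.ideal R A ^ 2).restrictScalars R) (U : Submodule R A) :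
    Submodule R ((A ⊗[R] A) ⧸ K) :=
  Submodule.map₂ ((smulDiff (KaehlerDifferential.D R A).toLinearMap).compr₂
    (kaehlerEmbedding (twist 𝒜 c) hK)) ⊤ U

variable (hc : IsBicharacter c) (hstp : IsStarProduct 𝒜 c stp)
include hc hstp

lemma IsStarProduct.flip_one_eq_id : stp.flip 1 = LinearMap.id := by
  refine LinearMap.ext_on (span_isHomogeneousElem_eq_top 𝒜) ?_
  rintro a ⟨p, ha⟩
  simp [hstp p 0 a ha 1 SetLike.GradedOne.one_mem, hc.zero_right]

lemma IsStarProduct.one_eq_id : stp 1 = LinearMap.id := by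
  refine LinearMap.ext_on (span_isHomogeneousElem_eq_top 𝒜) ?_
  rintro a ⟨p, ha⟩
  simp [hstp 0 p 1 SetLike.GradedOne.one_mem a ha, hc.zero_left]

lemma twist_bimoduleDiff {p q r : ι} {a a' b : A} (ha : a ∈ 𝒜 p) (hb : b ∈ 𝒜 q) (ha' : a' ∈ 𝒜 r) :
    twist 𝒜 c (bimoduleDiff stp (a ⊗ₜ a') b) =
      (c p (q + r) * c q r) • (a ⊗ₜ a' * tensorDiff R A b) := by
  have hone : (1 : A) ∈ 𝒜 0 := SetLike.GradedOne.one_mem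
  have hleft : twist 𝒜 c (stp a 1 ⊗ₜ stp b a') = (c p (q + r) * c q r) • (a ⊗ₜ[R] (b * a')) := by
    rw [hstp p 0 a ha 1 hone, hstp q r b hb a' ha', hc.zero_right, one_smul, mul_one,
      Units.smul_def, TensorProduct.tmul_smul, map_smul,
      twist_tmul c ha (SetLike.mul_mem_graded hb ha'), ← Units.smul_def, smul_smul, mul_comm]
  have hright : twist 𝒜 c (stp a b ⊗ₜ stp 1 a') = (c p (q + r) * c q r) • ((a * b) ⊗ₜ[R] a') := by
    rw [hstp p q a ha b hb, hstp 0 r 1 hone a' ha', hc.zero_left, one_smul, one_mul,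
      Units.smul_def, ← TensorProduct.smul_tmul', map_smul,
      twist_tmul c (SetLike.mul_mem_graded ha hb) ha', ← Units.smul_def, smul_smul, hc.cocycle,
      mul_comm (c q r)]
  simp only [bimoduleDiff_tmul, map_sub, TensorProduct.map_tmul, LinearMap.flip_apply, hleft,
    hright, tensorDiff_apply, mul_sub, smul_sub, Algebra.TensorProduct.tmul_mul_tmul,
    mul_one, one_mul, mul_comm a']

variable (hK : K.map (twist 𝒜 c).toLinearMap =
    (KaehlerDifferential.ideal R A ^ 2).restrictScalars R)

lemma mkQ_bimoduleDiff {p q r : ι} {a a' b : A} (ha : a ∈ 𝒜 p) (hb : b ∈ 𝒜 q) (ha' : a' ∈ 𝒜 r) :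
    K.mkQ (bimoduleDiff stp (a ⊗ₜ a') b) =
      (c p (q + r) * c q r) • kaehlerEmbedding (twist 𝒜 c) hK
        ((a * a') • KaehlerDifferential.D R A b) := by
  have h := kaehlerEmbedding_mul'_smul_D (twist 𝒜 c) hK (a ⊗ₜ a') b
  rw [LinearMap.mul'_apply] at h
  rw [h, Units.smul_def, ← map_smul, ← map_smul, ← Units.smul_def,
    ← twist_bimoduleDiff hc hstp ha hb ha', LinearEquiv.symm_apply_apply]

variable (hU : IsSpannedByHomogeneous 𝒜 U)
include hU

lemma map₂_bimoduleDiff {S T : Submodule R A} (hS : IsSpannedByHomogeneous 𝒜 S)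
    (hT : IsSpannedByHomogeneous 𝒜 T) :
    Submodule.map₂ ((bimoduleDiff stp).compr₂ K.mkQ)
      (Submodule.map₂ (TensorProduct.mk R A A) S T) U =
    Submodule.map₂ ((smulDiff (KaehlerDifferential.D R A).toLinearMap).compr₂
        (kaehlerEmbedding (twist 𝒜 c) hK)) (S * T) U := by
  have hmul : S * T = (Submodule.map₂ (TensorProduct.mk R A A) S T).map (LinearMap.mul' R A) := by
    rw [Submodule.map_map₂, Submodule.mul_eq_map₂]
    rfl
  rw [hmul, Submodule.map₂_map_left]
  obtain ⟨s, hs, rfl⟩ := hS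
  obtain ⟨t, ht, rfl⟩ := hT
  obtain ⟨u, hu, rfl⟩ := hU
  rw [Submodule.map₂_span_span]
  refine map₂_span_eq_of_forall_unit_smul ?_
  rintro _ ⟨a, ha, a', ha', rfl⟩ b hb
  obtain ⟨p, ha⟩ := hs a ha
  obtain ⟨r, ha'⟩ := ht a' ha'
  obtain ⟨q, hb⟩ := hu b hb
  exact ⟨_, mkQ_bimoduleDiff hc hstp hK ha hb ha'⟩

lemma span_bimoduleDiff_eq_horizontalForms {s t : Set A} (hs : IsSpannedByHomogeneous 𝒜 (.span R s))
    (ht : IsSpannedByHomogeneous 𝒜 (.span R t))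
    (hst : Submodule.span R s * Submodule.span R t = ⊤) :
    Submodule.span R {y | ∃ a ∈ s, ∃ a' ∈ t, ∃ b ∈ U, y = K.mkQ (bimoduleDiff stp (a ⊗ₜ a') b)} =
    horizontalForms hK U := by
  rw [horizontalForms, ← hst, ← map₂_bimoduleDiff hc hstp hK hU hs ht]
  exact (map₂_map₂_span_span ((bimoduleDiff stp).compr₂ K.mkQ)
    (TensorProduct.mk R A A) s t U).symm

lemma span_left_mul_diff_eq_horizontalForms : Submodule.span R {y | ∃ a, ∃ b ∈ U,
      y = K.mkQ (TensorProduct.map (stp a) LinearMap.id (1 ⊗ₜ b - b ⊗ₜ 1))} =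
    horizontalForms hK U := by
  rw [← span_bimoduleDiff_eq_horizontalForms hc hstp hK hU (s := Set.univ) (t := {1})
    isSpannedByHomogeneous_span_univ isSpannedByHomogeneous_span_one
    (by rw [← Submodule.one_eq_span, mul_one, Submodule.span_univ])]
  simp only [Set.mem_univ, true_and, Set.mem_singleton_iff, exists_eq_left, bimoduleDiff_tmul,
    hstp.flip_one_eq_id hc]

lemma span_right_mul_diff_eq_horizontalForms : Submodule.span R {y | ∃ a, ∃ b ∈ U,
      y = K.mkQ (TensorProduct.map LinearMap.id (stp.flip a) (1 ⊗ₜ b - b ⊗ₜ 1))} =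
    horizontalForms hK U := by
  rw [← span_bimoduleDiff_eq_horizontalForms hc hstp hK hU (s := {1}) (t := Set.univ)
    isSpannedByHomogeneous_span_one isSpannedByHomogeneous_span_univ
    (by rw [← Submodule.one_eq_span, one_mul, Submodule.span_univ])]
  simp only [Set.mem_univ, true_and, Set.mem_singleton_iff, exists_eq_left, bimoduleDiff_tmul,
    hstp.one_eq_id hc]

lemma span_mul_diff_mul_eq_horizontalForms : Submodule.span R {y | ∃ a a', ∃ b ∈ U,
      y = K.mkQ (TensorProduct.map (stp a) (stp.flip a') (1 ⊗ₜ b - b ⊗ₜ 1))} =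
    horizontalForms hK U := by
  have htop : (Submodule.span R Set.univ * Submodule.span R Set.univ : Submodule R A) = ⊤ := by
    rw [Submodule.span_mul_span, Set.univ_mul_univ, Submodule.span_univ]
  rw [← span_bimoduleDiff_eq_horizontalForms hc hstp hK hU isSpannedByHomogeneous_span_univ
    isSpannedByHomogeneous_span_univ htop]
  simp only [Set.mem_univ, true_and, bimoduleDiff_tmul]

end Horizontal

section BaseForms

variable {ι R A : Type*} [DecidableEq ι] [AddCommMonoid ι] [CommRing R] [CommRing A] [Algebra R A]
  {𝒜 : ι → Submodule R A} [GradedAlgebra 𝒜] {c : ι → ι → Rˣ} {stp : A →ₗ[R] A →ₗ[R] A}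
  {deg : ι →+ ℤ} (hc₀ : ∀ p q, deg p = 0 → deg q = 0 → c p q = 1)
  (hstp : IsStarProduct 𝒜 c stp)

omit [DecidableEq ι] [GradedAlgebra 𝒜] in
include hc₀ hstp in
lemma stp_eq_mul {a b : A} (ha : a ∈ degreePart 𝒜 deg 0) (hb : b ∈ degreePart 𝒜 deg 0) :
    stp a b = a * b := by
  rw [degreePart_eq_span] at ha hb
  refine bilin_eq_of_mem_span (g := LinearMap.mul R A) ?_ ha hb
  rintro a ⟨p, hp, ha⟩ b ⟨q, hq, hb⟩
  rw [hstp p q a ha b hb, hc₀ p q hp hq, one_smul, LinearMap.mul_apply']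

include hc₀ in
lemma twist_tmul_eq_self {a b : A} (ha : a ∈ degreePart 𝒜 deg 0) (hb : b ∈ degreePart 𝒜 deg 0) :
    twist 𝒜 c (a ⊗ₜ b) = a ⊗ₜ[R] b := by
  rw [degreePart_eq_span] at ha hb
  refine bilin_eq_of_mem_span (f := (TensorProduct.mk R A A).compr₂ (twist 𝒜 c).toLinearMap)
    (g := TensorProduct.mk R A A) ?_ ha hb
  rintro a ⟨p, hp, ha⟩ b ⟨q, hq, hb⟩
  exact (twist_tmul c ha hb).trans (by rw [hc₀ p q hp hq, one_smul]; rfl)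

variable {B : Subalgebra R A} {K : Submodule R (A ⊗[R] A)}
  (hK : K.map (twist 𝒜 c).toLinearMap =
    (KaehlerDifferential.ideal R A ^ 2).restrictScalars R)

variable (B) in
/-- The comparison map from the Kähler differentials of a subalgebra `B` to the deformed
differentials of `A`. -/
def baseComparison : Ω[B⁄R] →ₗ[R] (A ⊗[R] A) ⧸ K :=
  kaehlerEmbedding (twist 𝒜 c) hK ∘ₗ (KaehlerDifferential.map R R B A).restrictScalars R

variable (hB : B.toSubmodule = degreePart 𝒜 deg 0)
include hc₀ hB

lemma baseComparison_smul_D (b b' : B) :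
    baseComparison B hK (b • KaehlerDifferential.D R B b' : Ω[B⁄R]) =
      K.mkQ ((b : A) ⊗ₜ (b' : A) - (b * b' : A) ⊗ₜ 1) := by
  have hmem {a : A} (ha : a ∈ B) : a ∈ degreePart 𝒜 deg 0 := hB.le ha
  have h := kaehlerEmbedding_mul'_smul_D (twist 𝒜 c) hK ((b : A) ⊗ₜ 1) b'
  rw [LinearMap.mul'_apply, mul_one] at h
  have hmap : KaehlerDifferential.map R R B A (b • KaehlerDifferential.D R B b' : Ω[B⁄R]) =
      (b : A) • KaehlerDifferential.D R A (b' : A) := by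
    rw [map_smul, KaehlerDifferential.map_D]; rfl
  rw [baseComparison, LinearMap.comp_apply, LinearMap.restrictScalars_apply, hmap, h]
  congr 1
  rw [LinearEquiv.symm_apply_eq, map_sub, twist_tmul_eq_self hc₀ (hmem b.2) (hmem b'.2),
    twist_tmul_eq_self hc₀ (hmem (mul_mem b.2 b'.2)) (hmem (one_mem B))]
  simp [mul_sub]

lemma baseComparison_D (b : B) : baseComparison B hK (KaehlerDifferential.D R B b) =
    K.mkQ (1 ⊗ₜ (b : A) - (b : A) ⊗ₜ 1) := by
  simpa using baseComparison_smul_D hc₀ hK hB 1 b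

include hstp

lemma range_baseComparison : LinearMap.range (baseComparison B hK) =
    Submodule.span R {y | ∃ b ∈ degreePart 𝒜 deg 0, ∃ b' ∈ degreePart 𝒜 deg 0,
      y = K.mkQ (stp b 1 ⊗ₜ b' - stp b b' ⊗ₜ 1)} := by
  rw [LinearMap.range_eq_map, ← map₂_smulDiff_D_eq_top, Submodule.map_map₂,
    Submodule.map₂_eq_span_image2, ← hB]
  congr 1
  ext y
  constructor
  · rintro ⟨b, -, b', -, rfl⟩
    refine ⟨b, b.2, b', b'.2, ?_⟩
    rw [stp_eq_mul hc₀ hstp (hB.le b.2) (hB.le b'.2),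
      stp_eq_mul hc₀ hstp (hB.le b.2) (hB.le (one_mem B)), mul_one]
    exact baseComparison_smul_D hc₀ hK hB b b'
  · rintro ⟨b, hb, b', hb', rfl⟩
    refine ⟨⟨b, hb⟩, trivial, ⟨b', hb'⟩, trivial, ?_⟩
    rw [stp_eq_mul hc₀ hstp (hB.le hb) (hB.le hb'),
      stp_eq_mul hc₀ hstp (hB.le hb) (hB.le (one_mem B)), mul_one]
    exact baseComparison_smul_D hc₀ hK hB ⟨b, hb⟩ ⟨b', hb'⟩

lemma baseComparison_smul (b : B) {l : ((A ⊗[R] A) ⧸ K) →ₗ[R] (A ⊗[R] A) ⧸ K}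
    (hl : ∀ x, l (K.mkQ x) = K.mkQ (TensorProduct.map (stp b) LinearMap.id x)) (ω : Ω[B⁄R]) :
    baseComparison B hK (b • ω) = l (baseComparison B hK ω) := by
  have hω : ω ∈ Submodule.map₂ (smulDiff (KaehlerDifferential.D R B).toLinearMap) ⊤ ⊤ :=
    map₂_smulDiff_D_eq_top R B ▸ trivial
  rw [Submodule.map₂_eq_span_image2] at hω
  refine LinearMap.eqOn_span (f := baseComparison B hK ∘ₗ Algebra.lsmul R R _ b)
    (g := l ∘ₗ baseComparison B hK) ?_ hω
  rintro _ ⟨b₁, -, b₂, -, rfl⟩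
  have h {a a' : A} (ha : a ∈ B) (ha' : a' ∈ B) : stp a a' = a * a' :=
    stp_eq_mul hc₀ hstp (hB.le ha) (hB.le ha')
  have hs : baseComparison B hK (b • b₁ • KaehlerDifferential.D R B b₂ : Ω[B⁄R]) =
    K.mkQ ((b * b₁ : A) ⊗ₜ (b₂ : A) - (b * b₁ * b₂ : A) ⊗ₜ 1) := by
    rw [smul_smul]
    exact baseComparison_smul_D hc₀ hK hB (b * b₁) b₂
  refine hs.trans (Eq.trans ?_ (congrArg l (baseComparison_smul_D hc₀ hK hB b₁ b₂)).symm)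
  rw [hl, map_sub (TensorProduct.map _ _), TensorProduct.map_tmul, TensorProduct.map_tmul,
    h b.2 b₁.2, h b.2 (mul_mem b₁.2 b₂.2), mul_assoc]
  rfl

end BaseForms

section General

variable {ι R A : Type*} [DecidableEq ι] [AddCommMonoid ι] [CommRing R] [CommRing A] [Algebra R A]
  {𝒜 : ι → Submodule R A} [GradedAlgebra 𝒜] {deg : ι →+ ℤ} {c : ι → ι → Rˣ}
  {stp : A →ₗ[R] A →ₗ[R] A} {bmul : A ⊗[R] A →ₗ[R] A ⊗[R] A →ₗ[R] A ⊗[R] A}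

theorem deformed_horizontal_forms_general
    (hone : (1 : A) ∈ degreePart 𝒜 deg (-1) * degreePart 𝒜 deg 1)
    (hc : IsBicharacter c) (hc₀ : ∀ p q, deg p = 0 → deg q = 0 → c p q = 1)
    (hstp : IsStarProduct 𝒜 c stp) (hbmul : IsBraidedProduct 𝒜 c stp bmul)
    {B : Subalgebra R A} (hB : B.toSubmodule = degreePart 𝒜 deg 0)
    {K K₂ : Submodule R (A ⊗[R] A)} (hK : K = LinearMap.ker (TensorProduct.lift stp))
    (hK₂ : K₂ = Submodule.span R {y | ∃ x ∈ K, ∃ x' ∈ K, y = bmul x x'}) :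
    (Submodule.span R {y : (A ⊗[R] A) ⧸ K₂ | ∃ a, ∃ b ∈ degreePart 𝒜 deg 0,
        y = K₂.mkQ (TensorProduct.map (stp a) LinearMap.id (1 ⊗ₜ b - b ⊗ₜ 1))} =
      Submodule.span R {y | ∃ a, ∃ b ∈ degreePart 𝒜 deg 0,
        y = K₂.mkQ (TensorProduct.map LinearMap.id (stp.flip a) (1 ⊗ₜ b - b ⊗ₜ 1))}) ∧
    (Submodule.span R {y : (A ⊗[R] A) ⧸ K₂ | ∃ a, ∃ b ∈ degreePart 𝒜 deg 0,
        y = K₂.mkQ (TensorProduct.map (stp a) LinearMap.id (1 ⊗ₜ b - b ⊗ₜ 1))} =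
      Submodule.span R {y | ∃ a a', ∃ b ∈ degreePart 𝒜 deg 0,
        y = K₂.mkQ (TensorProduct.map (stp a) (stp.flip a') (1 ⊗ₜ b - b ⊗ₜ 1))}) ∧
    ∃ e : Ω[B⁄R] →ₗ[R] (A ⊗[R] A) ⧸ K₂, Function.Injective e ∧
      LinearMap.range e = Submodule.span R {y | ∃ b ∈ degreePart 𝒜 deg 0,
        ∃ b' ∈ degreePart 𝒜 deg 0, y = K₂.mkQ (stp b 1 ⊗ₜ b' - stp b b' ⊗ₜ 1)} ∧
      (∀ b : B, e (KaehlerDifferential.D R B b) = K₂.mkQ (1 ⊗ₜ (b : A) - (b : A) ⊗ₜ 1)) ∧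
      ∀ l : A → ((A ⊗[R] A) ⧸ K₂) →ₗ[R] (A ⊗[R] A) ⧸ K₂,
        (∀ a x, l a (K₂.mkQ x) = K₂.mkQ (TensorProduct.map (stp a) LinearMap.id x)) →
        ∀ (b : B) (ω : Ω[B⁄R]), e (b • ω) = l b (e ω) := by
  have hτ : K₂.map (twist 𝒜 c).toLinearMap =
      (KaehlerDifferential.ideal R A ^ 2).restrictScalars R := by
    rw [← map_twist_map₂_ker hc hstp hbmul, hK₂, hK, Submodule.map₂_eq_span_image2]
    simp only [Set.image2, SetLike.mem_coe, eq_comm]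
  have hU : IsSpannedByHomogeneous 𝒜 (degreePart 𝒜 deg 0) :=
    isSpannedByHomogeneous_degreePart deg 0
  have hleft := span_left_mul_diff_eq_horizontalForms hc hstp hτ hU
  have hinj : Function.Injective (KaehlerDifferential.map R R B A) :=
    kaehlerDifferential_map_injective_of_one_mem_mul (by simpa using congrArg SetLike.coe hB) hone
  exact ⟨hleft.trans (span_right_mul_diff_eq_horizontalForms hc hstp hτ hU).symm,
    hleft.trans (span_mul_diff_mul_eq_horizontalForms hc hstp hτ hU).symm, baseComparison B hτ,
    (kaehlerEmbedding_injective _ hτ).comp hinj, range_baseComparison hc₀ hstp hτ hB,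
    baseComparison_D hc₀ hτ hB, fun l hl b => baseComparison_smul hc₀ hstp hτ hB b (hl b)⟩

end General

section Phase

variable (θ : ℝ)

/-- `phase θ` as a function with values in the units of `ℂ`. -/
def phaseUnit (p q : ℤ × ℤ) : ℂˣ := Units.mk0 (phase θ p q) (Complex.exp_ne_zero _)

lemma isBicharacter_phaseUnit : IsBicharacter (phaseUnit θ) where
  map_add_left p q r := by
    ext
    simp only [phaseUnit, phase, Units.val_mul, Units.val_mk0, ← Complex.exp_add]
    congr 1
    push_cast [Prod.fst_add, Prod.snd_add]
    ring
  map_add_right p q r := by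
    ext
    simp only [phaseUnit, phase, Units.val_mul, Units.val_mk0, ← Complex.exp_add]
    congr 1
    push_cast [Prod.fst_add, Prod.snd_add]
    ring

lemma phaseUnit_eq_one {p q : ℤ × ℤ} (hp : p.1 + p.2 = 0) (hq : q.1 + q.2 = 0) :
    phaseUnit θ p q = 1 := by
  ext
  have hpq : p.1 * q.2 - p.2 * q.1 = 0 := by linear_combination p.1 * hq - q.1 * hp
  simp [phaseUnit, phase, hpq]

lemma rphase_eq_div (u w : ℤ × ℤ) : rphase θ u w = ↑(phaseUnit θ w u / phaseUnit θ u w) := by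
  simp only [rphase, phaseUnit, phase, Units.val_div_eq_div_val, Units.val_mk0, ← Complex.exp_sub]
  congr 1
  push_cast
  ring

end Phase

lemma one_mem_degreePart_neg_one_mul_degreePart_one {A : Type*} [CommRing A] [Algebra ℂ A]
    {𝒜 : ℤ × ℤ → Submodule ℂ A} {z1 z2 z1s z2s : A} (hz1 : z1 ∈ 𝒜 (1, 0)) (hz2 : z2 ∈ 𝒜 (0, 1))
    (hz1s : z1s ∈ 𝒜 (-1, 0)) (hz2s : z2s ∈ 𝒜 (0, -1)) (hrel : z1s * z1 + z2s * z2 = 1) :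
    1 ∈ degreePart 𝒜 (AddMonoidHom.fst ℤ ℤ + AddMonoidHom.snd ℤ ℤ) (-1) *
      degreePart 𝒜 (AddMonoidHom.fst ℤ ℤ + AddMonoidHom.snd ℤ ℤ) 1 :=
  hrel ▸ add_mem
    (Submodule.mul_mem_mul (mem_degreePart (by simp) hz1s) (mem_degreePart (by simp) hz1))
    (Submodule.mul_mem_mul (mem_degreePart (by simp) hz2s) (mem_degreePart (by simp) hz2))

/-- in `Ω¹(A_θ)` the left `A_θ`-submodule generated by `{d_θ b : b ∈ B}`,
the right `A_θ`-submodule generated by the same set, and the `A_θ`-sub-bimodule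
generated by it all coincide (the horizontal forms `Ω¹_hor(A_θ)`); moreover the
`B`-submodule `B d_θ B`, with the differential `b ↦ d_θ b`, is isomorphic as a
`B`-module with derivation to the Kähler differentials `Ω¹_{B/ℂ}` of `B ≅ O(S²)`. -/
theorem deformed_horizontal_forms
    (A : Type) [CommRing A] [Algebra ℂ A]
    (𝒜 : ℤ × ℤ → Submodule ℂ A) [GradedAlgebra 𝒜]
    (z1 z2 z1s z2s : A)
    (hz1 : z1 ∈ 𝒜 (1, 0)) (hz2 : z2 ∈ 𝒜 (0, 1))
    (hz1s : z1s ∈ 𝒜 (-1, 0)) (hz2s : z2s ∈ 𝒜 (0, -1))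
    (hrel : z1s * z1 + z2s * z2 = 1)
    (huniv : ∀ (C : Type) [CommRing C] [Algebra ℂ C] (w1 w2 w1s w2s : C),
      w1s * w1 + w2s * w2 = 1 →
      ∃! f : A →ₐ[ℂ] C, f z1 = w1 ∧ f z2 = w2 ∧ f z1s = w1s ∧ f z2s = w2s)
    (θ : ℝ)
    (stp : A →ₗ[ℂ] A →ₗ[ℂ] A)
    (hstp : ∀ (p q : ℤ × ℤ), ∀ a ∈ 𝒜 p, ∀ a' ∈ 𝒜 q, stp a a' = phase θ p q • (a * a'))
    -- the braided product on `A ⊗ A`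
    (bmul : A ⊗[ℂ] A →ₗ[ℂ] A ⊗[ℂ] A →ₗ[ℂ] A ⊗[ℂ] A)
    (hbmul : ∀ (p p' u u' : ℤ × ℤ), ∀ a ∈ 𝒜 p, ∀ a' ∈ 𝒜 p', ∀ c ∈ 𝒜 u, ∀ c' ∈ 𝒜 u',
      bmul (a ⊗ₜ[ℂ] a') (c ⊗ₜ[ℂ] c')
        = rphase θ u p' • ((stp a c) ⊗ₜ[ℂ] (stp a' c')))
    -- `B` as subalgebra of total-degree-`0` elements
    (Bsub : Subalgebra ℂ A) (hBsub : Bsub.toSubmodule = totalDeg 𝒜 0) :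
    -- notation: `Kθ = Γ¹(A_θ)`, `K2θ = (Γ¹(A_θ))²`, so `Ω¹(A_θ)` is the image of `Kθ`
    -- in `(A ⊗ A) ⧸ K2θ`
    ∀ (Kθ K2θ : Submodule ℂ (A ⊗[ℂ] A)),
      Kθ = LinearMap.ker (TensorProduct.lift stp) →
      K2θ = Submodule.span ℂ {y : A ⊗[ℂ] A | ∃ x ∈ Kθ, ∃ x' ∈ Kθ, y = bmul x x'} →
      -- the left `A_θ`-submodule generated by the `d_θ b` coincides with the right one
      (Submodule.span ℂ {y : (A ⊗[ℂ] A) ⧸ K2θ | ∃ (a : A), ∃ b ∈ totalDeg 𝒜 0,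
          y = K2θ.mkQ (TensorProduct.map (stp a) LinearMap.id
            ((1 : A) ⊗ₜ[ℂ] b - b ⊗ₜ[ℂ] (1 : A)))}
        = Submodule.span ℂ {y : (A ⊗[ℂ] A) ⧸ K2θ | ∃ (a : A), ∃ b ∈ totalDeg 𝒜 0,
          y = K2θ.mkQ (TensorProduct.map LinearMap.id (stp.flip a)
            ((1 : A) ⊗ₜ[ℂ] b - b ⊗ₜ[ℂ] (1 : A)))}) ∧
      -- and with the `A_θ`-sub-bimodule generated by the `d_θ b`
      (Submodule.span ℂ {y : (A ⊗[ℂ] A) ⧸ K2θ | ∃ (a : A), ∃ b ∈ totalDeg 𝒜 0,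
          y = K2θ.mkQ (TensorProduct.map (stp a) LinearMap.id
            ((1 : A) ⊗ₜ[ℂ] b - b ⊗ₜ[ℂ] (1 : A)))}
        = Submodule.span ℂ {y : (A ⊗[ℂ] A) ⧸ K2θ | ∃ (a a' : A), ∃ b ∈ totalDeg 𝒜 0,
          y = K2θ.mkQ (TensorProduct.map (stp a) (stp.flip a')
            ((1 : A) ⊗ₜ[ℂ] b - b ⊗ₜ[ℂ] (1 : A)))}) ∧
      -- `B d_θ B` with `b ↦ d_θ b` is isomorphic, as a `B`-module with derivation,
      -- to the Kähler differentials `Ω¹_{B/ℂ}`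
      (∃ e : KaehlerDifferential ℂ ↥Bsub →ₗ[ℂ] ((A ⊗[ℂ] A) ⧸ K2θ),
        Function.Injective e ∧
        LinearMap.range e
          = Submodule.span ℂ {y : (A ⊗[ℂ] A) ⧸ K2θ | ∃ b ∈ totalDeg 𝒜 0,
              ∃ b' ∈ totalDeg 𝒜 0,
              y = K2θ.mkQ ((stp b 1) ⊗ₜ[ℂ] b' - (stp b b') ⊗ₜ[ℂ] (1 : A))} ∧
        (∀ b : ↥Bsub,
          e (KaehlerDifferential.D ℂ ↥Bsub b)
            = K2θ.mkQ ((1 : A) ⊗ₜ[ℂ] (b : A) - (b : A) ⊗ₜ[ℂ] (1 : A))) ∧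
        (∀ (lactθ : A → ((A ⊗[ℂ] A) ⧸ K2θ) →ₗ[ℂ] ((A ⊗[ℂ] A) ⧸ K2θ)),
          (∀ (a : A) (x : A ⊗[ℂ] A),
            lactθ a (K2θ.mkQ x) = K2θ.mkQ (TensorProduct.map (stp a) LinearMap.id x)) →
          ∀ (b : ↥Bsub) (w : KaehlerDifferential ℂ ↥Bsub),
            e (b • w) = lactθ (b : A) (e w))) := by
  intro Kθ K2θ hK hK2
  exact deformed_horizontal_forms_general
    (one_mem_degreePart_neg_one_mul_degreePart_one hz1 hz2 hz1s hz2s hrel)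
    (isBicharacter_phaseUnit θ) (fun _ _ => phaseUnit_eq_one θ) hstp
    (fun p q p' q' a ha b hb a' ha' b' hb' =>
      (hbmul p q p' q' a ha b hb a' ha' b' hb').trans (by rw [rphase_eq_div]; rfl))
    hBsub hK hK2
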